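/- arXiv:2601.18768 — 10 statements merged into one kernel-verified Lean document; each statement's English description precedes it below -/
import Mathlib

section
/- For all vectors x, y, z in H, the inequality ‖x‖·‖y‖ + ‖z‖·‖x + y + z‖ ≥ ‖x + z‖·‖y + z‖ holds. -/
open RealInnerProductSpace

theorem stmt0 {H : Type*} [NormedAddCommGroup H] [InnerProductSpace ℝ H] (x y z : H) :
    ‖x‖ * ‖y‖ + ‖z‖ * ‖x + y + z‖ ≥ ‖x + z‖ * ‖y + z‖ := by
  -- These vertices span a quadrilateral with successive edges `x`, `z`, `y`, `x + y + z` and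
  -- diagonals `x + z`, `y + z`, up to sign.
  have ptolemy := EuclideanGeometry.mul_dist_le_mul_dist_add_mul_dist x 0 (-z) (-(y + z))
  simpa only [dist_eq_norm, sub_zero, sub_neg_eq_add, zero_add, neg_add_cancel_comm_assoc,
    add_assoc] using ptolemy
end

section
/- For all vectors x, y, z in H, one has ‖x‖·‖y‖·‖z‖·‖x + y + z‖ ≥ ‖x‖²·⟨y,z⟩ + ‖y‖²·⟨x,z⟩ − ‖z‖²·⟨x,y⟩ + 2·⟨x,z⟩·⟨y,z⟩. -/
open RealInnerProductSpace

/-!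
Put `u = ⟪y, z⟫ • x + ⟪x, z⟫ • y - ⟪x, y⟫ • z`. The right-hand side of the inequality is
`⟪u, x + y + z⟫`, so by Cauchy–Schwarz it is enough that `‖u‖ ≤ ‖x‖ * ‖y‖ * ‖z‖`. Now `u` is the
vector part of the Clifford product `x z y`, whose norm is `‖x‖ * ‖y‖ * ‖z‖`, and the squared norm
of the remaining trivector part is the Gram determinant of `x, y, z`, which is nonnegative.
-/

section SeminormedSpace

variable {H : Type*} [SeminormedAddCommGroup H] [InnerProductSpace ℝ H]

theorem det_gram_fin_three (x y z : H) :
    (Matrix.gram ℝ ![x, y, z]).det =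
      ‖x‖ ^ 2 * ‖y‖ ^ 2 * ‖z‖ ^ 2 + 2 * ⟪x, y⟫ * ⟪x, z⟫ * ⟪y, z⟫
        - ‖x‖ ^ 2 * ⟪y, z⟫ ^ 2 - ‖y‖ ^ 2 * ⟪x, z⟫ ^ 2 - ‖z‖ ^ 2 * ⟪x, y⟫ ^ 2 := by
  simp only [Matrix.det_fin_three, Matrix.gram_apply, Matrix.cons_val,
    real_inner_self_eq_norm_sq, real_inner_comm x y, real_inner_comm x z, real_inner_comm y z]
  ring

theorem norm_inner_smul_add_sub_sq_add_det_gram (x y z : H) :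
    ‖⟪y, z⟫ • x + ⟪x, z⟫ • y - ⟪x, y⟫ • z‖ ^ 2 + (Matrix.gram ℝ ![x, y, z]).det =
      (‖x‖ * ‖y‖ * ‖z‖) ^ 2 := by
  rw [det_gram_fin_three, ← real_inner_self_eq_norm_sq]
  simp only [inner_add_left, inner_add_right, inner_sub_left, inner_sub_right,
    real_inner_smul_left, real_inner_smul_right, real_inner_self_eq_norm_sq,
    norm_smul, mul_pow, Real.norm_eq_abs, sq_abs,
    real_inner_comm x y, real_inner_comm x z, real_inner_comm y z]
  ring

theorem norm_inner_smul_add_sub_le (x y z : H) :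
    ‖⟪y, z⟫ • x + ⟪x, z⟫ • y - ⟪x, y⟫ • z‖ ≤ ‖x‖ * ‖y‖ * ‖z‖ := by
  have det_nonneg : 0 ≤ (Matrix.gram ℝ ![x, y, z]).det :=
    (Matrix.posSemidef_gram ℝ ![x, y, z]).det_nonneg
  refine le_of_sq_le_sq ?_ (by positivity)
  linarith [norm_inner_smul_add_sub_sq_add_det_gram x y z]

theorem inner_mul_inner_add_sub_le (x y z w : H) :
    ⟪y, z⟫ * ⟪x, w⟫ + ⟪x, z⟫ * ⟪y, w⟫ - ⟪x, y⟫ * ⟪z, w⟫ ≤ ‖x‖ * ‖y‖ * ‖z‖ * ‖w‖ := by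
  calc ⟪y, z⟫ * ⟪x, w⟫ + ⟪x, z⟫ * ⟪y, w⟫ - ⟪x, y⟫ * ⟪z, w⟫
      = ⟪⟪y, z⟫ • x + ⟪x, z⟫ • y - ⟪x, y⟫ • z, w⟫ := by
        simp only [inner_add_left, inner_sub_left, real_inner_smul_left]
    _ ≤ ‖⟪y, z⟫ • x + ⟪x, z⟫ • y - ⟪x, y⟫ • z‖ * ‖w‖ := real_inner_le_norm _ _
    _ ≤ ‖x‖ * ‖y‖ * ‖z‖ * ‖w‖ := by
        gcongr
        exact norm_inner_smul_add_sub_le x y z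

theorem stmt2_general (x y z : H) :
    ‖x‖ * ‖y‖ * ‖z‖ * ‖x + y + z‖ ≥
      ‖x‖ ^ 2 * ⟪y, z⟫ + ‖y‖ ^ 2 * ⟪x, z⟫ - ‖z‖ ^ 2 * ⟪x, y⟫ + 2 * ⟪x, z⟫ * ⟪y, z⟫ := by
  have bound := inner_mul_inner_add_sub_le x y z (x + y + z)
  simp only [inner_add_right, real_inner_self_eq_norm_sq,
    real_inner_comm x y, real_inner_comm x z, real_inner_comm y z] at bound
  linarith

end SeminormedSpace

theorem stmt2 {H : Type*} [NormedAddCommGroup H] [InnerProductSpace ℝ H] (x y z : H) :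
    ‖x‖ * ‖y‖ * ‖z‖ * ‖x + y + z‖ ≥
      ‖x‖ ^ 2 * ⟪y, z⟫ + ‖y‖ ^ 2 * ⟪x, z⟫ - ‖z‖ ^ 2 * ⟪x, y⟫ + 2 * ⟪x, z⟫ * ⟪y, z⟫ :=
  stmt2_general x y z
end

section
/- For all vectors x, y, z in H, one has ‖z‖²·⟨x,y⟩ + ‖x‖·‖y‖·‖z‖·‖x + y + z‖ ≥ ‖x‖²·⟨y,z⟩ + ‖y‖²·⟨x,z⟩ + 2·⟨x,z⟩·⟨y,z⟩. -/
open RealInnerProductSpace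

/-! In the Clifford algebra where `v² = ‖v‖²`, the product `x y z` has squared norm
`‖x‖² ‖y‖² ‖z‖²` and splits orthogonally into a vector and a trivector; the squared norm of the
trivector is the Gram determinant of `x, y, z`. Hence the vector part has norm at most
`‖x‖ ‖y‖ ‖z‖`, and Cauchy–Schwarz bounds its inner product with any vector. The inequality is this
bound for the vector part of `x z y` and the vector `x + y + z`. -/

section CliffordVectorPart

variable {E : Type*} [SeminormedAddCommGroup E] [InnerProductSpace ℝ E]

/-- The vector part of the Clifford product `x y z`, for the convention `v² = ‖v‖²`. It is written
out as a vector of `E`, so that the Clifford algebra itself is not needed to bound its norm. -/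
def cliffordVectorPart (x y z : E) : E :=
  ⟪x, y⟫ • z - ⟪x, z⟫ • y + ⟪y, z⟫ • x

theorem inner_cliffordVectorPart (x y z w : E) :
    ⟪cliffordVectorPart x y z, w⟫ = ⟪x, y⟫ * ⟪z, w⟫ - ⟪x, z⟫ * ⟪y, w⟫ + ⟪y, z⟫ * ⟪x, w⟫ := by
  simp only [cliffordVectorPart, inner_add_left, inner_sub_left, real_inner_smul_left]

theorem norm_cliffordVectorPart_sq_add_det_gram (x y z : E) :
    ‖cliffordVectorPart x y z‖ ^ 2 + (Matrix.gram ℝ ![x, y, z]).det = (‖x‖ * ‖y‖ * ‖z‖) ^ 2 := by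
  rw [← real_inner_self_eq_norm_sq, inner_cliffordVectorPart]
  simp only [real_inner_comm (cliffordVectorPart x y z), inner_cliffordVectorPart,
    Matrix.det_fin_three, Matrix.gram_apply, Matrix.cons_val, real_inner_self_eq_norm_sq,
    real_inner_comm x y, real_inner_comm x z, real_inner_comm y z]
  ring

theorem norm_cliffordVectorPart_le (x y z : E) :
    ‖cliffordVectorPart x y z‖ ≤ ‖x‖ * ‖y‖ * ‖z‖ := by
  have gram_nonneg : 0 ≤ (Matrix.gram ℝ ![x, y, z]).det :=
    (Matrix.posSemidef_gram ℝ ![x, y, z]).det_nonneg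
  refine le_of_sq_le_sq ?_ (by positivity)
  linarith [norm_cliffordVectorPart_sq_add_det_gram x y z]

theorem inner_cliffordVectorPart_le (x y z w : E) :
    ⟪cliffordVectorPart x y z, w⟫ ≤ ‖x‖ * ‖y‖ * ‖z‖ * ‖w‖ :=
  calc ⟪cliffordVectorPart x y z, w⟫
      ≤ ‖cliffordVectorPart x y z‖ * ‖w‖ := real_inner_le_norm _ _
    _ ≤ ‖x‖ * ‖y‖ * ‖z‖ * ‖w‖ := by gcongr; exact norm_cliffordVectorPart_le x y z

theorem inner_cliffordVectorPart_add_add (x y z : E) :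
    ⟪cliffordVectorPart x y z, x + y + z⟫ =
      ‖x‖ ^ 2 * ⟪y, z⟫ - ‖y‖ ^ 2 * ⟪x, z⟫ + ‖z‖ ^ 2 * ⟪x, y⟫ + 2 * ⟪x, y⟫ * ⟪y, z⟫ := by
  simp only [inner_cliffordVectorPart, inner_add_right, real_inner_self_eq_norm_sq,
    real_inner_comm x y, real_inner_comm x z, real_inner_comm y z]
  ring

theorem stmt3_general (x y z : E) :
    ‖z‖ ^ 2 * ⟪x, y⟫ + ‖x‖ * ‖y‖ * ‖z‖ * ‖x + y + z‖ ≥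
      ‖x‖ ^ 2 * ⟪y, z⟫ + ‖y‖ ^ 2 * ⟪x, z⟫ + 2 * ⟪x, z⟫ * ⟪y, z⟫ := by
  have pairing_le := inner_cliffordVectorPart_le x z y (x + z + y)
  rw [inner_cliffordVectorPart_add_add, real_inner_comm y z, add_right_comm x z y] at pairing_le
  linarith

end CliffordVectorPart

theorem stmt3 {H : Type*} [NormedAddCommGroup H] [InnerProductSpace ℝ H] (x y z : H) :
    ‖z‖ ^ 2 * ⟪x, y⟫ + ‖x‖ * ‖y‖ * ‖z‖ * ‖x + y + z‖ ≥
      ‖x‖ ^ 2 * ⟪y, z⟫ + ‖y‖ ^ 2 * ⟪x, z⟫ + 2 * ⟪x, z⟫ * ⟪y, z⟫ :=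
  stmt3_general x y z
end

section
/- Let x, y be vectors in H and λ, μ real numbers, and set z = λx + μy. Then the quantity ξ = ‖x‖²‖y‖²‖z‖²·‖x + y + z‖² − (‖x‖²⟨y,z⟩ + ‖y‖²⟨x,z⟩ − ‖z‖²⟨x,y⟩ + 2⟨x,z⟩⟨y,z⟩)² satisfies the identity ξ = (‖x‖²‖y‖² − ⟨x,y⟩²)·(‖x‖²·λ(λ+1) − ‖y‖²·μ(μ+1))². -/
open RealInnerProductSpace

/-!
For plane vectors regarded as complex numbers, put `t = x z̄ y` and `w = x + y + z`. The squared
bracket is `⟨t, w⟩²` and `‖t‖ = ‖x‖ ‖y‖ ‖z‖`, so the left-hand side is the Gram determinant of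
`(t, w)`. The product `x z̄ y` is the Jordan triple product `⟨x, z⟩ y + ⟨z, y⟩ x - ⟨x, y⟩ z`, which
makes sense for every bilinear form. For `z = l x + μ y` it is `μ ‖y‖² x + l ‖x‖² y`, while
`w = (l + 1) x + (μ + 1) y`; the Gram determinant of `(t, w)` is therefore that of `(x, y)` times
the square of the determinant `μ (μ + 1) ‖y‖² - l (l + 1) ‖x‖²` of these coefficients.
-/

open LinearMap (BilinForm toMatrix₂Aux toMatrix₂Aux_apply)

section GramMatrix

open Matrix

variable {R M N n : Type*} [AddCommMonoid M] [AddCommMonoid N] [Fintype n]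

theorem toMatrix₂Aux_sum_smul {m m' n' : Type*} [CommSemiring R] [Module R M] [Module R N]
    [Fintype n'] (B : M →ₗ[R] N →ₗ[R] R) (A : Matrix m n R) (C : Matrix m' n' R) (v : n → M)
    (w : n' → N) :
    toMatrix₂Aux R (fun i ↦ ∑ k, A i k • v k) (fun j ↦ ∑ k, C j k • w k) B =
      A * toMatrix₂Aux R v w B * Cᵀ := by
  ext i j
  simp only [toMatrix₂Aux_apply, mul_apply, transpose_apply, map_sum, map_smul,
    LinearMap.sum_apply, LinearMap.smul_apply, smul_eq_mul]
  exact Finset.sum_congr rfl fun _ _ ↦ mul_comm _ _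

variable [CommRing R] [Module R M] [Module R N]

theorem det_toMatrix₂Aux_sum_smul [DecidableEq n] (B : M →ₗ[R] N →ₗ[R] R) (A C : Matrix n n R)
    (v : n → M) (w : n → N) :
    (toMatrix₂Aux R (fun i ↦ ∑ k, A i k • v k) (fun j ↦ ∑ k, C j k • w k) B).det =
      A.det * (toMatrix₂Aux R v w B).det * C.det := by
  rw [toMatrix₂Aux_sum_smul, det_mul, det_mul, det_transpose]

theorem det_gram_pair_smul_add_smul (B : BilinForm R M) (x y : M) (a b c d : R) :
    B (a • x + b • y) (a • x + b • y) * B (c • x + d • y) (c • x + d • y) -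
        B (a • x + b • y) (c • x + d • y) * B (c • x + d • y) (a • x + b • y) =
      (a * d - b * c) ^ 2 * (B x x * B y y - B x y * B y x) := by
  have h := det_toMatrix₂Aux_sum_smul B !![a, b; c, d] !![a, b; c, d] ![x, y] ![x, y]
  simp only [det_fin_two, toMatrix₂Aux_apply, Fin.sum_univ_two, of_apply, cons_val_zero,
    cons_val_one] at h
  rw [h]
  ring

end GramMatrix

section JordanTriple

variable {R M : Type*} [CommRing R] [AddCommGroup M] [Module R M]

/-- The Jordan triple product `{x, z, y}` attached to a bilinear form, with the conjugated factor
`z` in the middle: for the dot product on `ℂ = ℝ²` it is `x z̄ y`. -/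
def jordanTriple (B : BilinForm R M) (x z y : M) : M :=
  B x z • y + B z y • x - B x y • z

theorem jordanTriple_smul_add_smul (B : BilinForm R M) (x y : M) (l μ : R) :
    jordanTriple B x (l • x + μ • y) y = (μ * B y y) • x + (l * B x x) • y := by
  simp only [jordanTriple, map_add, map_smul, LinearMap.add_apply, LinearMap.smul_apply,
    smul_eq_mul]
  module

theorem apply_jordanTriple_self_of_eq_smul_add_smul (B : BilinForm R M) {x y z : M} {l μ : R}
    (hz : z = l • x + μ • y) :
    B (jordanTriple B x z y) (jordanTriple B x z y) = B x x * B y y * B z z := by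
  rw [hz, jordanTriple_smul_add_smul]
  simp only [map_add, map_smul, LinearMap.add_apply, LinearMap.smul_apply, smul_eq_mul]
  ring

theorem apply_jordanTriple_add_add {B : BilinForm R M} (hB : B.IsSymm) (x y z : M) :
    B (jordanTriple B x z y) (x + y + z) =
      B x x * B y z + B y y * B x z - B z z * B x y + 2 * B x z * B y z := by
  simp only [jordanTriple, map_add, map_sub, map_smul, LinearMap.add_apply, LinearMap.sub_apply,
    LinearMap.smul_apply, smul_eq_mul, hB.eq y x, hB.eq z x, hB.eq z y]
  ring

theorem stmt4_general {B : BilinForm R M} (hB : B.IsSymm) (x y z : M) (l μ : R)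
    (hz : z = l • x + μ • y) :
    B x x * B y y * B z z * B (x + y + z) (x + y + z) -
        (B x x * B y z + B y y * B x z - B z z * B x y + 2 * B x z * B y z) ^ 2 =
      (B x x * B y y - B x y ^ 2) * (B x x * (l * (l + 1)) - B y y * (μ * (μ + 1))) ^ 2 := by
  set t := jordanTriple B x z y with t_def
  set w := x + y + z with w_def
  have ht : t = (μ * B y y) • x + (l * B x x) • y := by
    rw [t_def, hz, jordanTriple_smul_add_smul]
  have hw : w = (l + 1) • x + (μ + 1) • y := by
    rw [w_def, hz]
    module
  calc
    _ = B t t * B w w - B t w * B w t := by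
      rw [apply_jordanTriple_self_of_eq_smul_add_smul B hz, hB.eq w t,
        apply_jordanTriple_add_add hB, sq]
    _ = (μ * B y y * (μ + 1) - l * B x x * (l + 1)) ^ 2 * (B x x * B y y - B x y * B y x) := by
      rw [ht, hw, det_gram_pair_smul_add_smul]
    _ = _ := by
      rw [hB.eq y x]
      ring

end JordanTriple

theorem stmt4 {H : Type*} [NormedAddCommGroup H] [InnerProductSpace ℝ H] (x y z : H) (l μ : ℝ)
    (hz : z = l • x + μ • y) :
    ‖x‖ ^ 2 * ‖y‖ ^ 2 * ‖z‖ ^ 2 * ‖x + y + z‖ ^ 2 -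
      (‖x‖ ^ 2 * ⟪y, z⟫ + ‖y‖ ^ 2 * ⟪x, z⟫ - ‖z‖ ^ 2 * ⟪x, y⟫ + 2 * ⟪x, z⟫ * ⟪y, z⟫) ^ 2 =
      (‖x‖ ^ 2 * ‖y‖ ^ 2 - ⟪x, y⟫ ^ 2) *
        (‖x‖ ^ 2 * (l * (l + 1)) - ‖y‖ ^ 2 * (μ * (μ + 1))) ^ 2 := by
  simpa only [innerₗ_apply_apply, real_inner_self_eq_norm_sq] using
    stmt4_general (B := innerₗ H) ⟨fun u v ↦ real_inner_comm v u⟩ x y z l μ hz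
end

section
/- Let y, z be vectors in H and λ, μ real numbers, and set x = λy + μz. Then the quantity ξ = ‖x‖²‖y‖²‖z‖²·‖x + y + z‖² − (‖x‖²⟨y,z⟩ + ‖y‖²⟨x,z⟩ − ‖z‖²⟨x,y⟩ + 2⟨x,z⟩⟨y,z⟩)² satisfies the identity ξ = (‖y‖²‖z‖² − ⟨y,z⟩²)·(‖y‖²·λ(λ+1) + ‖z‖²·μ(μ+1) + 2λ(μ+1)·⟨y,z⟩)². -/
open RealInnerProductSpace

/-!
The norm is multiplicative on a plane, viewed as `ℂ`: the squared modulus `‖x‖²‖z‖²‖y‖²‖w‖²` of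
`(x̄z)(ȳw)`, where `w = x + y + z`, is the sum of the squares of its real and imaginary parts. By
Lagrange's identity `x̄z` has real part `⟨x, z⟩` and imaginary part the coordinate determinant of
`x, z` times the area spanned by `y` and `z`; likewise for `ȳw`. Algebraically this is Brahmagupta's
identity for `X ^ 2 + G * Y ^ 2`, where `G` is the Gram determinant of `y` and `z`, so it holds for
every symmetric bilinear form.
-/

open LinearMap (BilinForm)

section WedgeForm

variable {R M : Type*} [CommRing R] [AddCommGroup M] [Module R M] {B : BilinForm R M}

/-- The bilinear form induced by `B` on bivectors, evaluated at `a ∧ b` and `c ∧ d`. It is defined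
on quadruples of vectors, to avoid the second exterior power. In particular `wedgeForm B a b a b` is
the Gram determinant of `a` and `b`. -/
def wedgeForm (B : BilinForm R M) (a b c d : M) : R :=
  B a c * B b d - B a d * B b c

theorem wedgeForm_smul_add_smul_left (s t : R) (u v c d : M) :
    wedgeForm B (s • u + t • v) v c d = s * wedgeForm B u v c d := by
  simp only [wedgeForm, map_add, map_smul, LinearMap.add_apply, LinearMap.smul_apply, smul_eq_mul]
  ring

theorem wedgeForm_smul_add_smul_right (s t : R) (u v c d : M) :
    wedgeForm B u (s • u + t • v) c d = t * wedgeForm B u v c d := by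
  simp only [wedgeForm, map_add, map_smul, LinearMap.add_apply, LinearMap.smul_apply, smul_eq_mul]
  ring

theorem wedgeForm_comm (hB : B.IsSymm) (a b c d : M) :
    wedgeForm B a b c d = wedgeForm B c d a b := by
  simp only [wedgeForm, hB.eq c, hB.eq d]
  ring

theorem wedgeForm_self (hB : B.IsSymm) (a b : M) :
    wedgeForm B a b a b = B a a * B b b - B a b ^ 2 := by
  rw [wedgeForm, hB.eq b a, sq]

-- The hypothesis says that `a ∧ b = s • (u ∧ v)`, as far as `B` can tell.
theorem lagrange_identity_of_wedgeForm_eq (hB : B.IsSymm) {a b u v : M} {s : R}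
    (hab : ∀ p q, wedgeForm B a b p q = s * wedgeForm B u v p q) :
    B a a * B b b = B a b ^ 2 + wedgeForm B u v u v * s ^ 2 := by
  have gram_eq : wedgeForm B a b a b = wedgeForm B u v u v * s ^ 2 := by
    rw [hab, wedgeForm_comm hB, hab]
    ring
  rw [← gram_eq, wedgeForm_self hB, add_sub_cancel]

theorem brahmagupta_identity_of_wedgeForm_eq (hB : B.IsSymm) {a b c d u v : M} {s t : R}
    (hab : ∀ p q, wedgeForm B a b p q = s * wedgeForm B u v p q)
    (hcd : ∀ p q, wedgeForm B c d p q = t * wedgeForm B u v p q) :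
    B a a * B b b * (B c c * B d d) =
      (B a b * B c d - wedgeForm B a b c d) ^ 2 +
        wedgeForm B u v u v * (B a b * t + s * B c d) ^ 2 := by
  have wedge_eq : wedgeForm B a b c d = wedgeForm B u v u v * s * t := by
    rw [hab, wedgeForm_comm hB, hcd]
    ring
  rw [lagrange_identity_of_wedgeForm_eq hB hab,
    lagrange_identity_of_wedgeForm_eq hB hcd, wedge_eq]
  exact sq_add_mul_sq_mul_sq_add_mul_sq ..

theorem apply_mul_apply_sub_wedgeForm_add_add (hB : B.IsSymm) (x y z : M) :
    B x z * B y (x + y + z) - wedgeForm B x z y (x + y + z) =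
      B x x * B y z + B y y * B x z - B z z * B x y + 2 * B x z * B y z := by
  simp only [wedgeForm, map_add, hB.eq y x, hB.eq z x, hB.eq z y]
  ring

theorem stmt5_general (hB : B.IsSymm) (x y z : M) (l μ : R) (hx : x = l • y + μ • z) :
    B x x * B y y * B z z * B (x + y + z) (x + y + z) -
      (B x x * B y z + B y y * B x z - B z z * B x y + 2 * B x z * B y z) ^ 2 =
      (B y y * B z z - B y z ^ 2) *
        (B y y * (l * (l + 1)) + B z z * (μ * (μ + 1)) + 2 * l * (μ + 1) * B y z) ^ 2 := by
  have hw : x + y + z = (l + 1) • y + (μ + 1) • z := by rw [hx]; module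
  have hxz (p q : M) : wedgeForm B x z p q = l * wedgeForm B y z p q := by
    rw [hx, wedgeForm_smul_add_smul_left]
  have hyw (p q : M) : wedgeForm B y (x + y + z) p q = (μ + 1) * wedgeForm B y z p q := by
    rw [hw, wedgeForm_smul_add_smul_right]
  have imaginary_part : B x z * (μ + 1) + l * B y (x + y + z) =
      B y y * (l * (l + 1)) + B z z * (μ * (μ + 1)) + 2 * l * (μ + 1) * B y z := by
    simp only [hx, map_add, map_smul, LinearMap.add_apply, LinearMap.smul_apply, smul_eq_mul]
    ring
  rw [← apply_mul_apply_sub_wedgeForm_add_add hB, ← wedgeForm_self hB, ← imaginary_part]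
  linear_combination brahmagupta_identity_of_wedgeForm_eq hB hxz hyw

end WedgeForm

theorem stmt5 {H : Type*} [NormedAddCommGroup H] [InnerProductSpace ℝ H] (x y z : H) (l μ : ℝ)
    (hx : x = l • y + μ • z) :
    ‖x‖ ^ 2 * ‖y‖ ^ 2 * ‖z‖ ^ 2 * ‖x + y + z‖ ^ 2 -
      (‖x‖ ^ 2 * ⟪y, z⟫ + ‖y‖ ^ 2 * ⟪x, z⟫ - ‖z‖ ^ 2 * ⟪x, y⟫ + 2 * ⟪x, z⟫ * ⟪y, z⟫) ^ 2 =
      (‖y‖ ^ 2 * ‖z‖ ^ 2 - ⟪y, z⟫ ^ 2) *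
        (‖y‖ ^ 2 * (l * (l + 1)) + ‖z‖ ^ 2 * (μ * (μ + 1)) + 2 * l * (μ + 1) * ⟪y, z⟫) ^ 2 := by
  simpa only [innerₗ_apply_apply, real_inner_self_eq_norm_sq] using
    stmt5_general (B := innerₗ H) ⟨fun u v ↦ real_inner_comm v u⟩ x y z l μ hx
end

section
/- Let x, z be vectors in H and λ, μ real numbers, and set y = λx + μz. Then the quantity ξ = ‖x‖²‖y‖²‖z‖²·‖x + y + z‖² − (‖x‖²⟨y,z⟩ + ‖y‖²⟨x,z⟩ − ‖z‖²⟨x,y⟩ + 2⟨x,z⟩⟨y,z⟩)² satisfies the identity ξ = (‖x‖²‖z‖² − ⟨x,z⟩²)·(‖x‖²·λ(λ+1) + ‖z‖²·μ(μ+1) + 2λ(μ+1)·⟨x,z⟩)². -/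
open RealInnerProductSpace

/-! In an oriented plane, regarded as `ℂ`, put `w = x + y + z`. The expression squared on the
left-hand side is the real part of `(x * conj w) * (y * conj z)`, so the identity computes the
square of the imaginary part of this product. In any dimension the bivectors `x ∧ w` and `y ∧ z`
are `μ + 1` and `l` times `x ∧ z`, and Lagrange's identity `B u u * B v v = (B u v)² + |u ∧ v|²`
replaces `|p|² = (Re p)² + (Im p)²`. The product formula for the norm form `a² + g * b²`, where
`g = |x ∧ z|²`, then plays the role of multiplication in `ℂ`.
-/

section BivectorForm

variable {R M : Type*} [CommRing R] [AddCommGroup M] [Module R M]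

/-- The bilinear form on bivectors induced by `B`, evaluated at `u ∧ v` and `r ∧ s`. It measures
areas and relative orientations; decomposable bivectors are encoded by pairs of vectors. -/
def bivectorForm (B : LinearMap.BilinForm R M) (u v r s : M) : R :=
  B u r * B v s - B u s * B v r

theorem bivectorForm_linear_combination (B : LinearMap.BilinForm R M) (a b c d : R)
    (e f r s : M) :
    bivectorForm B (a • e + b • f) (c • e + d • f) r s =
      (a * d - b * c) * bivectorForm B e f r s := by
  simp only [bivectorForm, map_add, map_smul, LinearMap.add_apply, LinearMap.smul_apply,
    smul_eq_mul]
  ring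

variable {B : LinearMap.BilinForm R M}

theorem bivectorForm_comm (hB : B.IsSymm) (u v r s : M) :
    bivectorForm B u v r s = bivectorForm B r s u v := by
  simp only [bivectorForm, hB.eq r, hB.eq s]
  ring

theorem bivectorForm_eq_mul_mul (hB : B.IsSymm) {u v r s e f : M} {m n : R}
    (huv : ∀ p q, bivectorForm B u v p q = m * bivectorForm B e f p q)
    (hrs : ∀ p q, bivectorForm B r s p q = n * bivectorForm B e f p q) :
    bivectorForm B u v r s = bivectorForm B e f e f * m * n := by
  rw [huv, bivectorForm_comm hB, hrs]
  ring

theorem bivectorForm_self (hB : B.IsSymm) (u v : M) :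
    bivectorForm B u v u v = B u u * B v v - B u v ^ 2 := by
  rw [bivectorForm, hB.eq v u, sq]

theorem apply_self_mul_sub_sq_of_bivectorForm_eq_mul (hB : B.IsSymm) {u v r s e f : M} {m n : R}
    (huv : ∀ p q, bivectorForm B u v p q = m * bivectorForm B e f p q)
    (hrs : ∀ p q, bivectorForm B r s p q = n * bivectorForm B e f p q) :
    (B u u * B v v) * (B r r * B s s) - (B u v * B r s - bivectorForm B u v r s) ^ 2 =
      bivectorForm B e f e f * (B u v * n + m * B r s) ^ 2 := by
  set g := bivectorForm B e f e f with hg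
  have lagrange_uv : B u u * B v v = B u v ^ 2 + g * m ^ 2 := by
    rw [← sub_eq_iff_eq_add', ← bivectorForm_self hB, bivectorForm_eq_mul_mul hB huv huv,
      mul_assoc, ← sq]
  have lagrange_rs : B r r * B s s = B r s ^ 2 + g * n ^ 2 := by
    rw [← sub_eq_iff_eq_add', ← bivectorForm_self hB, bivectorForm_eq_mul_mul hB hrs hrs,
      mul_assoc, ← sq]
  rw [lagrange_uv, lagrange_rs, bivectorForm_eq_mul_mul hB huv hrs, ← hg,
    sq_add_mul_sq_mul_sq_add_mul_sq, add_sub_cancel_left]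

theorem apply_mul_apply_sub_bivectorForm_add_add (hB : B.IsSymm) (x y z : M) :
    B x (x + y + z) * B y z - bivectorForm B x (x + y + z) y z =
      B x x * B y z + B y y * B x z - B z z * B x y + 2 * B x z * B y z := by
  simp only [bivectorForm, map_add, LinearMap.add_apply, hB.eq z y]
  ring

theorem stmt6_general (hB : B.IsSymm) (x y z : M) (l μ : R) (hy : y = l • x + μ • z) :
    B x x * B y y * B z z * B (x + y + z) (x + y + z) -
      (B x x * B y z + B y y * B x z - B z z * B x y + 2 * B x z * B y z) ^ 2 =
      (B x x * B z z - B x z ^ 2) *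
        (B x x * (l * (l + 1)) + B z z * (μ * (μ + 1)) + 2 * l * (μ + 1) * B x z) ^ 2 := by
  set w := x + y + z with hw
  have hw_comb : w = (l + 1) • x + (μ + 1) • z := by rw [hw, hy]; module
  have hxw (p q : M) : bivectorForm B x w p q = (μ + 1) * bivectorForm B x z p q := by
    simpa [hw_comb] using bivectorForm_linear_combination B 1 0 (l + 1) (μ + 1) x z p q
  have hyz (p q : M) : bivectorForm B y z p q = l * bivectorForm B x z p q := by
    simpa [hy] using bivectorForm_linear_combination B l μ 0 1 x z p q
  have imaginary_part : B x w * l + (μ + 1) * B y z =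
      B x x * (l * (l + 1)) + B z z * (μ * (μ + 1)) + 2 * l * (μ + 1) * B x z := by
    simp only [hw_comb, hy, map_add, map_smul, LinearMap.add_apply, LinearMap.smul_apply,
      smul_eq_mul]
    ring
  rw [← apply_mul_apply_sub_bivectorForm_add_add hB, ← hw, ← imaginary_part,
    ← bivectorForm_self hB, ← apply_self_mul_sub_sq_of_bivectorForm_eq_mul hB hxw hyz]
  ring

end BivectorForm

theorem stmt6 {H : Type*} [NormedAddCommGroup H] [InnerProductSpace ℝ H] (x y z : H) (l μ : ℝ)
    (hy : y = l • x + μ • z) :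
    ‖x‖ ^ 2 * ‖y‖ ^ 2 * ‖z‖ ^ 2 * ‖x + y + z‖ ^ 2 -
      (‖x‖ ^ 2 * ⟪y, z⟫ + ‖y‖ ^ 2 * ⟪x, z⟫ - ‖z‖ ^ 2 * ⟪x, y⟫ + 2 * ⟪x, z⟫ * ⟪y, z⟫) ^ 2 =
      (‖x‖ ^ 2 * ‖z‖ ^ 2 - ⟪x, z⟫ ^ 2) *
        (‖x‖ ^ 2 * (l * (l + 1)) + ‖z‖ ^ 2 * (μ * (μ + 1)) + 2 * l * (μ + 1) * ⟪x, z⟫) ^ 2 := by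
  simp only [← real_inner_self_eq_norm_sq]
  exact stmt6_general (B := innerₗ H) ⟨fun u v => real_inner_comm v u⟩ x y z l μ hy
end

section
/- Let x, y, z be vectors in H. If equality ‖x‖·‖y‖ + ‖z‖·‖x + y + z‖ = ‖x + z‖·‖y + z‖ holds, then x, y, z are linearly dependent over ℝ, i.e., the family (x, y, z) is not linearly independent. -/
open RealInnerProductSpace

/-!
The hypothesis is the equality case of Ptolemy's inequality for the points `0`, `x`, `x + z`,
`x + y + z`. An inversion centred at the first of four points turns Ptolemy's inequality into the
triangle inequality for the images of the other three. In the equality case these images lie on a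
line, and the plane through the centre and this line contains the four original points. Hence
their differences `x`, `y`, `z` span a space of dimension at most two.
-/

open EuclideanGeometry

section Coplanar

variable {k V P : Type*} [DivisionRing k] [AddCommGroup V] [Module k V] [AddTorsor V P]

theorem not_linearIndependent_of_coplanar {s : Set P} (hs : Coplanar k s) {v : Fin 3 → V}
    (hv : ∀ i, v i ∈ vectorSpan k s) : ¬ LinearIndependent k v := by
  intro hli
  have := hs.finiteDimensional_vectorSpan
  have hli' : LinearIndependent k fun i => (⟨v i, hv i⟩ : vectorSpan k s) :=
    .of_comp (vectorSpan k s).subtype hli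
  have three_le : 3 ≤ Module.finrank k (vectorSpan k s) := by
    simpa using hli'.fintype_card_le_finrank
  have le_two := coplanar_iff_finrank_le_two.mp hs
  lia

end Coplanar

section Inversion

variable {V P : Type*} [NormedAddCommGroup V] [InnerProductSpace ℝ V] [MetricSpace P]
  [NormedAddTorsor V P]

theorem affineSpan_insert_image_inversion_le (c : P) (R : ℝ) (s : Set P) :
    affineSpan ℝ (insert c (inversion c R '' s)) ≤ affineSpan ℝ (insert c s) := by
  have hc : c ∈ affineSpan ℝ (insert c s) := mem_affineSpan ℝ (Set.mem_insert c s)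
  refine affineSpan_le.mpr (Set.insert_subset hc ?_)
  rintro _ ⟨p, hp, rfl⟩
  rw [inversion_eq_lineMap]
  exact AffineMap.lineMap_mem _ hc (mem_affineSpan ℝ (Set.mem_insert_of_mem c hp))

theorem affineSpan_insert_image_inversion (c : P) {R : ℝ} (hR : R ≠ 0) (s : Set P) :
    affineSpan ℝ (insert c (inversion c R '' s)) = affineSpan ℝ (insert c s) := by
  refine (affineSpan_insert_image_inversion_le c R s).antisymm ?_
  have h := affineSpan_insert_image_inversion_le c R (inversion c R '' s)
  rwa [← Set.image_comp, (inversion_involutive c hR).comp_self, Set.image_id] at h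

theorem coplanar_insert_image_inversion_iff (c : P) {R : ℝ} (hR : R ≠ 0) (s : Set P) :
    Coplanar ℝ (insert c (inversion c R '' s)) ↔ Coplanar ℝ (insert c s) := by
  rw [Coplanar, Coplanar, ← direction_affineSpan, ← direction_affineSpan,
    affineSpan_insert_image_inversion c hR]

theorem wbtw_inversion_iff_mul_dist_add_mul_dist_eq {a b c d : P} (hb : b ≠ a) (hc : c ≠ a)
    (hd : d ≠ a) {R : ℝ} (hR : R ≠ 0) :
    Wbtw ℝ (inversion a R b) (inversion a R c) (inversion a R d) ↔
      dist a b * dist c d + dist b c * dist a d = dist a c * dist b d := by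
  have hb' := dist_ne_zero.mpr hb.symm
  have hc' := dist_ne_zero.mpr hc.symm
  have hd' := dist_ne_zero.mpr hd.symm
  rw [← dist_add_dist_eq_iff, dist_inversion_inversion hb hc, dist_inversion_inversion hc hd,
    dist_inversion_inversion hb hd, dist_comm b a, dist_comm c a, dist_comm d a]
  field_simp
  constructor <;> intro h <;> linarith

theorem coplanar_of_mul_dist_add_mul_dist_eq {a b c d : P}
    (h : dist a b * dist c d + dist b c * dist a d = dist a c * dist b d) :
    Coplanar ℝ {a, b, c, d} := by
  rcases eq_or_ne b a with rfl | hb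
  · simpa using coplanar_triple ℝ b c d
  rcases eq_or_ne c a with rfl | hc
  · simpa [Set.insert_comm c b] using coplanar_triple ℝ b c d
  rcases eq_or_ne d a with rfl | hd
  · simpa [Set.insert_comm d, Set.pair_comm d] using coplanar_triple ℝ b c d
  have hcol : Collinear ℝ (inversion a 1 '' {b, c, d}) := by
    simpa only [Set.image_insert_eq, Set.image_singleton] using
      ((wbtw_inversion_iff_mul_dist_add_mul_dist_eq hb hc hd one_ne_zero).mpr h).collinear
  exact (coplanar_insert_image_inversion_iff a one_ne_zero _).mp (hcol.coplanar_insert a)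

end Inversion

theorem stmt10 {H : Type*} [NormedAddCommGroup H] [InnerProductSpace ℝ H] (x y z : H)
    (h : ‖x‖ * ‖y‖ + ‖z‖ * ‖x + y + z‖ = ‖x + z‖ * ‖y + z‖) :
    ¬ LinearIndependent ℝ ![x, y, z] := by
  have hy : x + y + z - (x + z) = y := by abel
  have hz : x + z - x = z := add_sub_cancel_left x z
  have hyz : x + y + z - x = y + z := by abel
  have hcop : Coplanar ℝ {0, x, x + z, x + y + z} := by
    apply coplanar_of_mul_dist_add_mul_dist_eq
    simpa only [dist_eq_norm_sub', sub_zero, hy, hz, hyz] using h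
  have hx_mem : x ∈ vectorSpan ℝ {0, x, x + z, x + y + z} := by
    simpa using vsub_mem_vectorSpan ℝ (p₁ := x) (p₂ := 0) (by simp) (by simp)
  have hy_mem : y ∈ vectorSpan ℝ {0, x, x + z, x + y + z} :=
    hy ▸ vsub_mem_vectorSpan ℝ (p₁ := x + y + z) (p₂ := x + z) (by simp) (by simp)
  have hz_mem : z ∈ vectorSpan ℝ {0, x, x + z, x + y + z} :=
    hz ▸ vsub_mem_vectorSpan ℝ (p₁ := x + z) (p₂ := x) (by simp) (by simp)
  apply not_linearIndependent_of_coplanar hcop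
  simp [Fin.forall_fin_succ, hx_mem, hy_mem, hz_mem]
end

section
/- For all vectors x, y, z in H with ⟨x,y⟩·⟨x,z⟩·⟨y,z⟩ > 0, one has ‖x‖²·⟨y,z⟩² + ‖y‖²·⟨x,z⟩² + ‖z‖²·⟨x,y⟩² ≥ 3·⟨x,y⟩·⟨x,z⟩·⟨y,z⟩. -/
open RealInnerProductSpace

theorem mul_add_mul_add_mul_le_sq_add_sq_add_sq {R : Type*} [CommRing R] [LinearOrder R]
    [IsStrictOrderedRing R] (a b c : R) :
    a * b + a * c + b * c ≤ a ^ 2 + b ^ 2 + c ^ 2 := by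
  linarith [two_mul_le_add_sq a b, two_mul_le_add_sq a c, two_mul_le_add_sq b c]

section InnerProductSpace

open scoped InnerProductSpace

variable {𝕜 E : Type*} [RCLike 𝕜] [SeminormedAddCommGroup E] [InnerProductSpace 𝕜 E]

theorem norm_inner_mul_norm_inner_mul_norm_inner_le (x y z : E) :
    ‖⟪x, y⟫_𝕜‖ * ‖⟪x, z⟫_𝕜‖ * ‖⟪y, z⟫_𝕜‖ ≤
      (‖x‖ * ‖⟪y, z⟫_𝕜‖) * (‖y‖ * ‖⟪x, z⟫_𝕜‖) :=
  calc
    ‖⟪x, y⟫_𝕜‖ * ‖⟪x, z⟫_𝕜‖ * ‖⟪y, z⟫_𝕜‖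
      ≤ ‖x‖ * ‖y‖ * ‖⟪x, z⟫_𝕜‖ * ‖⟪y, z⟫_𝕜‖ := by
        gcongr
        exact norm_inner_le_norm x y
    _ = (‖x‖ * ‖⟪y, z⟫_𝕜‖) * (‖y‖ * ‖⟪x, z⟫_𝕜‖) := by ring

theorem stmt12_general (x y z : E) :
    3 * (‖⟪x, y⟫_𝕜‖ * ‖⟪x, z⟫_𝕜‖ * ‖⟪y, z⟫_𝕜‖) ≤
      ‖x‖ ^ 2 * ‖⟪y, z⟫_𝕜‖ ^ 2 + ‖y‖ ^ 2 * ‖⟪x, z⟫_𝕜‖ ^ 2 + ‖z‖ ^ 2 * ‖⟪x, y⟫_𝕜‖ ^ 2 := by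
  have hxy := norm_inner_mul_norm_inner_mul_norm_inner_le (𝕜 := 𝕜) x y z
  have hxz := norm_inner_mul_norm_inner_mul_norm_inner_le (𝕜 := 𝕜) x z y
  have hyz := norm_inner_mul_norm_inner_mul_norm_inner_le (𝕜 := 𝕜) y z x
  rw [norm_inner_symm z y] at hxz
  rw [norm_inner_symm y x, norm_inner_symm z x] at hyz
  set a := ‖x‖ * ‖⟪y, z⟫_𝕜‖ with ha
  set b := ‖y‖ * ‖⟪x, z⟫_𝕜‖ with hb
  set c := ‖z‖ * ‖⟪x, y⟫_𝕜‖ with hc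
  calc
    3 * (‖⟪x, y⟫_𝕜‖ * ‖⟪x, z⟫_𝕜‖ * ‖⟪y, z⟫_𝕜‖) ≤ a * b + a * c + b * c := by linarith
    _ ≤ a ^ 2 + b ^ 2 + c ^ 2 := mul_add_mul_add_mul_le_sq_add_sq_add_sq a b c
    _ = _ := by simp only [ha, hb, hc, mul_pow]

end InnerProductSpace

theorem stmt12 {H : Type*} [NormedAddCommGroup H] [InnerProductSpace ℝ H] (x y z : H)
    (h : ⟪x, y⟫ * ⟪x, z⟫ * ⟪y, z⟫ > 0) :
    ‖x‖ ^ 2 * ⟪y, z⟫ ^ 2 + ‖y‖ ^ 2 * ⟪x, z⟫ ^ 2 + ‖z‖ ^ 2 * ⟪x, y⟫ ^ 2 ≥ 3 * (⟪x, y⟫ * ⟪x, z⟫ * ⟪y, z⟫) := by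
  simpa only [Real.norm_eq_abs, ← abs_mul, abs_of_pos h, sq_abs] using
    stmt12_general (𝕜 := ℝ) x y z
end

section
/- For all vectors x, y, z in H with ⟨x,y⟩·⟨x,z⟩·⟨y,z⟩ < 0, one has ‖x‖²·⟨y,z⟩² + ‖y‖²·⟨x,z⟩² + ‖z‖²·⟨x,y⟩² ≥ −6·⟨x,y⟩·⟨x,z⟩·⟨y,z⟩. -/
open RealInnerProductSpace

section

variable {E : Type*} [SeminormedAddCommGroup E] [InnerProductSpace ℝ E]

theorem norm_add_add_sq_real (x y z : E) :
    ‖x + y + z‖ ^ 2 = ‖x‖ ^ 2 + ‖y‖ ^ 2 + ‖z‖ ^ 2 + 2 * (⟪x, y⟫ + ⟪x, z⟫ + ⟪y, z⟫) := by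
  rw [norm_add_sq_real, norm_add_sq_real, inner_add_left]
  ring

theorem norm_smul_add_smul_add_smul_sq_real (a b c : ℝ) (x y z : E) :
    ‖a • x + b • y + c • z‖ ^ 2 =
      a ^ 2 * ‖x‖ ^ 2 + b ^ 2 * ‖y‖ ^ 2 + c ^ 2 * ‖z‖ ^ 2 +
        2 * (a * b * ⟪x, y⟫ + a * c * ⟪x, z⟫ + b * c * ⟪y, z⟫) := by
  simp only [norm_add_add_sq_real, norm_smul, mul_pow, Real.norm_eq_abs, sq_abs,
    real_inner_smul_left, real_inner_smul_right]
  ring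

/- Weighting each vector by the inner product of the other two makes all three cross terms equal
to `⟪x, y⟫ * ⟪x, z⟫ * ⟪y, z⟫`. -/
theorem norm_inner_smul_add_inner_smul_add_inner_smul_sq (x y z : E) :
    ‖⟪y, z⟫ • x + ⟪x, z⟫ • y + ⟪x, y⟫ • z‖ ^ 2 =
      ‖x‖ ^ 2 * ⟪y, z⟫ ^ 2 + ‖y‖ ^ 2 * ⟪x, z⟫ ^ 2 + ‖z‖ ^ 2 * ⟪x, y⟫ ^ 2 +
        6 * (⟪x, y⟫ * ⟪x, z⟫ * ⟪y, z⟫) := by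
  rw [norm_smul_add_smul_add_smul_sq_real]
  ring

theorem stmt13_general (x y z : E) :
    ‖x‖ ^ 2 * ⟪y, z⟫ ^ 2 + ‖y‖ ^ 2 * ⟪x, z⟫ ^ 2 + ‖z‖ ^ 2 * ⟪x, y⟫ ^ 2 ≥
      -6 * (⟪x, y⟫ * ⟪x, z⟫ * ⟪y, z⟫) := by
  have norm_sq_nonneg : 0 ≤ ‖⟪y, z⟫ • x + ⟪x, z⟫ • y + ⟪x, y⟫ • z‖ ^ 2 := sq_nonneg _
  rw [norm_inner_smul_add_inner_smul_add_inner_smul_sq] at norm_sq_nonneg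
  linarith

end

theorem stmt13 {H : Type*} [NormedAddCommGroup H] [InnerProductSpace ℝ H] (x y z : H)
    (h : ⟪x, y⟫ * ⟪x, z⟫ * ⟪y, z⟫ < 0) :
    ‖x‖ ^ 2 * ⟪y, z⟫ ^ 2 + ‖y‖ ^ 2 * ⟪x, z⟫ ^ 2 + ‖z‖ ^ 2 * ⟪x, y⟫ ^ 2 ≥ -6 * (⟪x, y⟫ * ⟪x, z⟫ * ⟪y, z⟫) :=
  stmt13_general x y z
end

section
/- For all vectors x, y, z in H, one has (‖x‖·‖y‖ + ‖z‖·‖x+y+z‖ − ‖y+z‖·‖z+x‖) + (‖y‖·‖z‖ + ‖x‖·‖x+y+z‖ − ‖z+x‖·‖x+y‖) + (‖x‖·‖z‖ + ‖y‖·‖x+y+z‖ − ‖x+y‖·‖y+z‖) ≥ 0. -/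
open RealInnerProductSpace

/-- Ptolemy's inequality for the points `0`, `x`, `x + y`, `x + y + z`. -/
theorem norm_add_mul_norm_add_le {V : Type*} [NormedAddCommGroup V] [InnerProductSpace ℝ V]
    (x y z : V) : ‖x + y‖ * ‖y + z‖ ≤ ‖x‖ * ‖z‖ + ‖y‖ * ‖x + y + z‖ := by
  have ptolemy := EuclideanGeometry.mul_dist_le_mul_dist_add_mul_dist 0 x (x + y) (x + y + z)
  have dist_diagonal : dist x (x + y + z) = ‖y + z‖ := by
    rw [add_assoc, dist_self_add_right]
  simpa only [dist_zero_left, dist_self_add_right, dist_diagonal] using ptolemy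

theorem stmt19 {H : Type*} [NormedAddCommGroup H] [InnerProductSpace ℝ H] (x y z : H) :
    (‖x‖ * ‖y‖ + ‖z‖ * ‖x + y + z‖ - ‖y + z‖ * ‖z + x‖) +
      (‖y‖ * ‖z‖ + ‖x‖ * ‖x + y + z‖ - ‖z + x‖ * ‖x + y‖) +
      (‖x‖ * ‖z‖ + ‖y‖ * ‖x + y + z‖ - ‖x + y‖ * ‖y + z‖) ≥ 0 := by
  have middle_z : ‖y + z‖ * ‖z + x‖ ≤ ‖x‖ * ‖y‖ + ‖z‖ * ‖x + y + z‖ := by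
    rw [mul_comm ‖x‖, add_rotate x y z]
    exact norm_add_mul_norm_add_le y z x
  have middle_x : ‖z + x‖ * ‖x + y‖ ≤ ‖y‖ * ‖z‖ + ‖x‖ * ‖x + y + z‖ := by
    rw [mul_comm ‖y‖, ← add_rotate z x y]
    exact norm_add_mul_norm_add_le z x y
  have middle_y : ‖x + y‖ * ‖y + z‖ ≤ ‖x‖ * ‖z‖ + ‖y‖ * ‖x + y + z‖ :=
    norm_add_mul_norm_add_le x y z
  linarith only [middle_x, middle_y, middle_z]
end
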